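/- arXiv:1407.7045 — 3 statements merged into one kernel-verified Lean document; each statement's English description precedes it below -/
import Mathlib

section
/- In a Euclidean conformal triangle datum, at every point of U and for all distinct i, j ∈ {1,2,3} with k the remaining index: ∂γ_i/∂f_j = h_ij/ℓ_ij and ∂γ_i/∂f_i = −h_ij/ℓ_ij − h_ik/ℓ_ik. -/
noncomputable section

/-- Partial derivative of `F` in the `k`-th coordinate direction at `x`. -/
def pd (k : Fin 3) (F : (Fin 3 → ℝ) → ℝ) (x : Fin 3 → ℝ) : ℝ :=
  fderiv ℝ F x (Pi.single k 1)

/-- The edge length `ℓ_ij = d_ij + d_ji` determined by the partial edge lengths. -/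
def len (d : Fin 3 → Fin 3 → (Fin 3 → ℝ) → ℝ) (i j : Fin 3) (x : Fin 3 → ℝ) : ℝ :=
  d i j x + d j i x

/-- The index complementary to `i` and `j` in `{0,1,2}` (for `i ≠ j`). -/
def other (i j : Fin 3) : Fin 3 := -(i + j)

/-- The angle `γ_i` of the Euclidean triangle with side lengths `ℓ_ab`, defined by the
Euclidean law of cosines `cos γ_i = (ℓ_ij² + ℓ_ik² − ℓ_jk²)/(2 ℓ_ij ℓ_ik)`. -/
def eGamma (d : Fin 3 → Fin 3 → (Fin 3 → ℝ) → ℝ) (i : Fin 3) (x : Fin 3 → ℝ) : ℝ :=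
  Real.arccos ((len d i (i+1) x ^ 2 + len d i (i+2) x ^ 2 - len d (i+1) (i+2) x ^ 2) /
    (2 * len d i (i+1) x * len d i (i+2) x))

/-- The signed height `h_ij = (d_ik − d_ij cos γ_i)/sin γ_i` from the edge center of edge
`{i,j}` to the dual center of the triangle. -/
def eHeight (d : Fin 3 → Fin 3 → (Fin 3 → ℝ) → ℝ) (i j : Fin 3) (x : Fin 3 → ℝ) : ℝ :=
  (d i (other i j) x - d i j x * Real.cos (eGamma d i x)) / Real.sin (eGamma d i x)

theorem pd_arccos_aux (a b c : (Fin 3 → ℝ) → ℝ) (x : Fin 3 → ℝ) (m : Fin 3)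
    (ha : DifferentiableAt ℝ a x) (hb : DifferentiableAt ℝ b x) (hc : DifferentiableAt ℝ c x)
    (pa : 0 < a x) (pb : 0 < b x)
    (t1 : a x < b x + c x) (t2 : b x < a x + c x) (t3 : c x < a x + b x) (C : ℝ)
    (hC : C = (a x ^ 2 + b x ^ 2 - c x ^ 2) / (2 * a x * b x)) :
    0 < Real.sin (Real.arccos C) ∧ Real.cos (Real.arccos C) = C ∧
    pd m (fun y => Real.arccos ((a y ^ 2 + b y ^ 2 - c y ^ 2) / (2 * a y * b y))) x =
      - ((a x * pd m a x + b x * pd m b x - c x * pd m c x) / (a x * b x)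
        - C * pd m a x / a x - C * pd m b x / b x) / Real.sin (Real.arccos C) := by
  have hab : 0 < 2 * a x * b x := by positivity
  have h1 : C < 1 := by
    rw [hC, div_lt_one hab]; nlinarith
  have h2 : -1 < C := by
    rw [hC, lt_div_iff₀ hab]; nlinarith
  have hcos := Real.cos_arccos h2.le h1.le
  have hsin : 0 < Real.sin (Real.arccos C) :=
    Real.sin_pos_of_pos_of_lt_pi (Real.arccos_pos.2 h1) (by
      rcases (Real.arccos_le_pi C).lt_or_eq with h | h
      · exact h
      · rw [h, Real.cos_pi] at hcos; linarith)
  refine ⟨hsin, hcos, ?_⟩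
  -- restrict to the line through `x` in direction `m`
  have hl : ∀ f : (Fin 3 → ℝ) → ℝ, DifferentiableAt ℝ f x →
      HasDerivAt (fun t : ℝ => f (x + t • Pi.single m (1 : ℝ))) (pd m f x) 0 := by
    intro f hf
    exact hf.hasFDerivAt.hasLineDerivAt _
  have hQ : DifferentiableAt ℝ
      (fun y => (a y ^ 2 + b y ^ 2 - c y ^ 2) / (2 * a y * b y)) x := by
    have n1 : DifferentiableAt ℝ (fun y => a y ^ 2 + b y ^ 2 - c y ^ 2) x := by fun_prop
    have n2 : DifferentiableAt ℝ (fun y => 2 * a y * b y) x := by fun_prop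
    have n3 := n1.mul (DifferentiableAt.inv n2 hab.ne')
    simp only [div_eq_mul_inv]
    exact n3
  have hdA := Real.hasDerivAt_arccos h2.ne' h1.ne
  have hG : DifferentiableAt ℝ
      (fun y => Real.arccos ((a y ^ 2 + b y ^ 2 - c y ^ 2) / (2 * a y * b y))) x := by
    rw [hC] at hdA
    exact DifferentiableAt.comp (g := Real.arccos) x hdA.differentiableAt hQ
  have e0 : x + (0 : ℝ) • (Pi.single m (1 : ℝ) : Fin 3 → ℝ) = x := by simp
  have A := hl a ha
  have B := hl b hb
  have D := hl c hc
  have Q := (((A.pow 2).add (B.pow 2)).sub (D.pow 2)).div ((A.const_mul 2).mul B)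
    (by simp only [e0, Pi.mul_apply]; exact hab.ne')
  have key := HasDerivAt.comp (h₂ := Real.arccos) (0 : ℝ)
    (by simp only [e0, Pi.mul_apply, Pi.div_apply, Pi.add_apply, Pi.sub_apply, Pi.pow_apply]
        rw [← hC]; exact hdA) Q
  have := (hl _ hG).unique key
  rw [this, ← Real.sin_arccos]
  simp only [e0, Pi.mul_apply, Pi.div_apply, Pi.add_apply, Pi.sub_apply, Pi.pow_apply]
  have hs := hsin.ne'
  generalize Real.sin (Real.arccos C) = s at hs
  rw [hC]
  field_simp
  ring

theorem gamma_aux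
    (U : Set (Fin 3 → ℝ)) (hUopen : IsOpen U)
    (d : Fin 3 → Fin 3 → (Fin 3 → ℝ) → ℝ)
    (hsmooth : ∀ i j : Fin 3, i ≠ j → ContDiffOn ℝ (⊤ : ℕ∞) (d i j) U)
    (hdep : ∀ i j k : Fin 3, i ≠ j → k ≠ i → k ≠ j → ∀ x ∈ U, pd k (d i j) x = 0)
    (hpos : ∀ i j : Fin 3, i ≠ j → ∀ x ∈ U, 0 < len d i j x)
    (htri : ∀ i j k : Fin 3, i ≠ j → j ≠ k → i ≠ k → ∀ x ∈ U,
      len d i j x < len d i k x + len d k j x)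
    (hconf : ∀ i j : Fin 3, i ≠ j → ∀ x ∈ U, pd i (len d i j) x = d i j x)
    (x : Fin 3 → ℝ) (hx : x ∈ U) (i j k : Fin 3) (hij : i ≠ j) (hjk : j ≠ k) (hik : i ≠ k)
    (hc : d i j x ^ 2 + d j k x ^ 2 + d k i x ^ 2
        = d j i x ^ 2 + d k j x ^ 2 + d i k x ^ 2)
    (hg : eGamma d i = fun y => Real.arccos
      ((len d i j y ^ 2 + len d i k y ^ 2 - len d j k y ^ 2) / (2 * len d i j y * len d i k y)))
    (ho : other i j = k) (ho' : other i k = j) :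
      pd j (eGamma d i) x = eHeight d i j x / len d i j x ∧
      pd i (eGamma d i) x
        = -(eHeight d i j x / len d i j x)
          - eHeight d i (other i j) x / len d i (other i j) x := by
  have hd : ∀ p q : Fin 3, p ≠ q → DifferentiableAt ℝ (d p q) x := fun p q h =>
    ((hsmooth p q h).contDiffAt (hUopen.mem_nhds hx)).differentiableAt (by simp)
  have hlen : ∀ p q : Fin 3, p ≠ q → DifferentiableAt ℝ (len d p q) x := fun p q h =>
    (hd p q h).add (hd q p h.symm)
  have hsymm : ∀ p q : Fin 3, len d p q = len d q p := fun p q => by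
    funext y; simp only [len]; ring
  have hzero : ∀ p q r : Fin 3, p ≠ q → r ≠ p → r ≠ q → pd r (len d p q) x = 0 := by
    intro p q r h1 h2 h3
    have e1 := hdep p q r h1 h2 h3 x hx
    have e2 := hdep q p r h1.symm h3 h2 x hx
    have : fderiv ℝ (len d p q) x = fderiv ℝ (d p q) x + fderiv ℝ (d q p) x :=
      fderiv_add (hd p q h1) (hd q p h1.symm)
    unfold pd at *
    rw [this, add_apply, e1, e2, add_zero]
  have pa := hpos i j hij x hx
  have pb := hpos i k hik x hx
  have t1 := htri i j k hij hjk hik x hx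
  have t2 := htri i k j hik hjk.symm hij x hx
  have t3 := htri j k i hjk hik.symm hij.symm x hx
  rw [hsymm k j] at t1
  rw [hsymm j i] at t3
  have aux := fun m => pd_arccos_aux (len d i j) (len d i k) (len d j k) x m (hlen i j hij)
    (hlen i k hik) (hlen j k hjk) pa pb t1 t2 t3 _ rfl
  have hgx : eGamma d i x = Real.arccos ((len d i j x ^ 2 + len d i k x ^ 2 - len d j k x ^ 2)
      / (2 * len d i j x * len d i k x)) := by rw [hg]
  rw [← hg, ← hgx] at aux
  obtain ⟨hs, hcos, -⟩ := aux 0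
  have Aj := (aux j).2.2
  have Ai := (aux i).2.2
  have pji : pd j (len d i j) x = d j i x := by rw [hsymm]; exact hconf j i hij.symm x hx
  rw [pji, hzero i k j hik hij.symm hjk, hconf j k hjk x hx] at Aj
  rw [hconf i j hij x hx, hconf i k hik x hx, hzero j k i hjk hij hik] at Ai
  rw [Aj, Ai, ho]
  unfold eHeight
  rw [ho, ho', hcos]
  have hs' := hs.ne'
  generalize Real.sin (eGamma d i x) = s at hs'
  have hl1 : len d i j x = d i j x + d j i x := rfl
  have hl2 : len d i k x = d i k x + d k i x := rfl
  have hl3 : len d j k x = d j k x + d k j x := rfl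
  generalize len d i j x = a at *
  generalize len d i k x = b at *
  generalize len d j k x = c at *
  have hC : a ^ 2 + b ^ 2 - c ^ 2 = 2 * (b * d i k x + a * d j i x - c * d j k x) := by
    rw [hl1, hl2, hl3]; linear_combination hc
  constructor
  · rw [hC]
    have hdd : d i j x = a - d j i x := by linarith
    rw [hdd]
    field_simp
    ring
  · field_simp
    ring

/-- Theorem 2.3 (conformal variation of Euclidean angles):
`∂γ_i/∂f_j = h_ij/ℓ_ij` and `∂γ_i/∂f_i = −h_ij/ℓ_ij − h_ik/ℓ_ik`. -/
theorem euclidean_angle_variation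
    (U : Set (Fin 3 → ℝ)) (hUopen : IsOpen U)
    (d : Fin 3 → Fin 3 → (Fin 3 → ℝ) → ℝ)
    (hsmooth : ∀ i j : Fin 3, i ≠ j → ContDiffOn ℝ (⊤ : ℕ∞) (d i j) U)
    (hdep : ∀ i j k : Fin 3, i ≠ j → k ≠ i → k ≠ j → ∀ x ∈ U, pd k (d i j) x = 0)
    (hpos : ∀ i j : Fin 3, i ≠ j → ∀ x ∈ U, 0 < len d i j x)
    (htri : ∀ i j k : Fin 3, i ≠ j → j ≠ k → i ≠ k → ∀ x ∈ U,
      len d i j x < len d i k x + len d k j x)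
    (hcompat : ∀ x ∈ U,
      d 0 1 x ^ 2 + d 1 2 x ^ 2 + d 2 0 x ^ 2
        = d 1 0 x ^ 2 + d 2 1 x ^ 2 + d 0 2 x ^ 2)
    (hconf : ∀ i j : Fin 3, i ≠ j → ∀ x ∈ U, pd i (len d i j) x = d i j x)
    :
    ∀ x ∈ U, ∀ i j : Fin 3, i ≠ j →
      pd j (eGamma d i) x = eHeight d i j x / len d i j x ∧
      pd i (eGamma d i) x
        = -(eHeight d i j x / len d i j x)
          - eHeight d i (other i j) x / len d i (other i j) x := by
  intro x hx i j hij
  have hc := hcompat x hx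
  have hsymm : ∀ p q : Fin 3, ∀ y, len d p q y = len d q p y := fun p q y => by
    simp only [len]; ring
  have G := gamma_aux U hUopen d hsmooth hdep hpos htri hconf x hx i j (other i j) hij
    (by revert i j; decide) (by revert i j; decide)
  refine G ?_ ?_ rfl (by clear G; revert i j; decide)
  · clear G
    fin_cases i <;> fin_cases j <;> first | exact absurd rfl hij | skip
    all_goals simp [other, show (-1 : Fin 3) = 2 from rfl, show (-2 : Fin 3) = 1 from rfl,
      show (1 + 2 : Fin 3) = 0 from rfl, show (2 + 1 : Fin 3) = 0 from rfl]
    all_goals linarith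
  · clear G
    have : (j = i + 1 ∧ other i j = i + 2) ∨ (j = i + 2 ∧ other i j = i + 1) := by
      revert i j; decide
    funext y
    rcases this with ⟨h1, h2⟩ | ⟨h1, h2⟩
    · rw [h2, h1]; rfl
    · rw [h2, h1, hsymm (i+2) (i+1)]
      unfold eGamma
      congr 1
      ring
end
end

section
/- Let α₁, α₂, α₃ ∈ ℝ and η₁₂ = η₂₁, η₂₃ = η₃₂, η₁₃ = η₃₁ ∈ ℝ, and let U ⊆ ℝ³ be an open set of points f = (f₁,f₂,f₃) on which: 1 + α_i e^{2f_i} > 0 for each i; the quantities defined by cosh ℓ_ij = √((1+α_i e^{2f_i})(1+α_j e^{2f_j})) + η_ij e^{f_i+f_j} satisfy cosh ℓ_ij > 1, and the resulting positive lengths ℓ_ij satisfy the strict triangle inequalities; the values x_ij := (1/sinh ℓ_ij)·∂(cosh ℓ_ij)/∂f_i lie in (−1,1), and d_ij := artanh(x_ij) > 0; and the height factors T_ij := cosh d_ij (tanh d_ik − tanh d_ij cos γ_i)/sin γ_i are positive for all distinct i,j, where γ_i ∈ (0,π) is defined by the hyperbolic law of cosines cos γ_i = (cosh ℓ_ij cosh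 ℓ_ik − cosh ℓ_jk)/(sinh ℓ_ij sinh ℓ_ik). Then at every point of U, the 3×3 matrix N with entries N_ab = −√(1 + α_b e^{2f_b}) · ∂γ_a/∂f_b is symmetric and positive definite. -/
noncomputable section

/-- `cosh ℓ_ij` for the discrete conformal structure with vertex weights `α` and edge
weights `η`: `cosh ℓ_ij = √((1+α_i e^{2f_i})(1+α_j e^{2f_j})) + η_ij e^{f_i+f_j}`. -/
def coshLen (α : Fin 3 → ℝ) (η : Fin 3 → Fin 3 → ℝ) (i j : Fin 3) (f : Fin 3 → ℝ) : ℝ :=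
  Real.sqrt ((1 + α i * Real.exp (2 * f i)) * (1 + α j * Real.exp (2 * f j)))
    + η i j * Real.exp (f i + f j)

/-- Inverse hyperbolic cosine, giving the length `ℓ_ij` from `cosh ℓ_ij`. -/
def arcosh (x : ℝ) : ℝ := Real.log (x + Real.sqrt (x ^ 2 - 1))

/-- Inverse hyperbolic tangent. -/
def artanh (x : ℝ) : ℝ := Real.log ((1 + x) / (1 - x)) / 2

/-- The angle `γ_i` determined by the hyperbolic law of cosines
`cos γ_i = (cosh ℓ_ij cosh ℓ_ik − cosh ℓ_jk)/(sinh ℓ_ij sinh ℓ_ik)`,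
using `sinh ℓ = √(cosh² ℓ − 1)`. -/
def cGamma (α : Fin 3 → ℝ) (η : Fin 3 → Fin 3 → ℝ) (i : Fin 3) (f : Fin 3 → ℝ) : ℝ :=
  Real.arccos ((coshLen α η i (i+1) f * coshLen α η i (i+2) f
      - coshLen α η (i+1) (i+2) f) /
    (Real.sqrt (coshLen α η i (i+1) f ^ 2 - 1)
      * Real.sqrt (coshLen α η i (i+2) f ^ 2 - 1)))

/-- `x_ij = (∂(cosh ℓ_ij)/∂f_i)/sinh ℓ_ij`, which is `tanh d_ij`. -/
def xCoef (α : Fin 3 → ℝ) (η : Fin 3 → Fin 3 → ℝ) (i j : Fin 3) (f : Fin 3 → ℝ) : ℝ :=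
  fderiv ℝ (coshLen α η i j) f (Pi.single i 1)
    / Real.sqrt (coshLen α η i j f ^ 2 - 1)

/-- The partial edge length `d_ij = artanh x_ij`. -/
def dPart (α : Fin 3 → ℝ) (η : Fin 3 → Fin 3 → ℝ) (i j : Fin 3) (f : Fin 3 → ℝ) : ℝ :=
  artanh (xCoef α η i j f)

/-- The height factor `T_ij = cosh d_ij (tanh d_ik − tanh d_ij cos γ_i)/sin γ_i`. -/
def cT (α : Fin 3 → ℝ) (η : Fin 3 → Fin 3 → ℝ) (i j : Fin 3) (f : Fin 3 → ℝ) : ℝ :=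
  Real.cosh (dPart α η i j f) * (Real.tanh (dPart α η i (other i j) f)
      - Real.tanh (dPart α η i j f) * Real.cos (cGamma α η i f))
    / Real.sin (cGamma α η i f)


theorem aux_idx (i j k : Fin 3) (hj : j = i + 1) (hk : k = i + 2) :
    i ≠ j ∧ i ≠ k ∧ j ≠ k ∧ other i j = k := by
  subst hj hk; revert i; unfold other; decide

theorem aux_scalar (A B C P Q a b c : ℝ) (hP : 0 < P) (hQ : 0 < Q) (ha : 0 < a)
    (h : 0 < (B - c / a) / Q - (A - b / a) / P * ((A * B - C) / (P * Q))) :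
    0 < (a * B - c) * P ^ 2 - (a * A - b) * (A * B - C) := by
  have hm : 0 < ((B - c / a) / Q - (A - b / a) / P * ((A * B - C) / (P * Q))) * (a * Q * P ^ 2) :=
    mul_pos h (by positivity)
  have e : ((B - c / a) / Q - (A - b / a) / P * ((A * B - C) / (P * Q))) * (a * Q * P ^ 2) =
    (a * B - c) * P ^ 2 - (a * A - b) * (A * B - C) := by field_simp
  rwa [e] at hm

theorem aux_len (α : Fin 3 → ℝ) (η : Fin 3 → Fin 3 → ℝ) (i j : Fin 3) (f : Fin 3 → ℝ)
    (hi : 0 < 1 + α i * Real.exp (2 * f i)) (hj : 0 < 1 + α j * Real.exp (2 * f j)) :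
    HasFDerivAt (coshLen α η i j)
      ((coshLen α η i j f - Real.sqrt (1 + α j * Real.exp (2 * f j)) /
          Real.sqrt (1 + α i * Real.exp (2 * f i))) •
            (ContinuousLinearMap.proj (R := ℝ) (φ := fun _ : Fin 3 => ℝ) i) +
       (coshLen α η i j f - Real.sqrt (1 + α i * Real.exp (2 * f i)) /
          Real.sqrt (1 + α j * Real.exp (2 * f j))) •
            (ContinuousLinearMap.proj (R := ℝ) (φ := fun _ : Fin 3 => ℝ) j)) f := by
  have pi := hasFDerivAt_apply (𝕜 := ℝ) i f
  have pj := hasFDerivAt_apply (𝕜 := ℝ) j f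
  have ui := ((pi.const_mul 2).exp.const_mul (α i)).const_add 1
  have uj := ((pj.const_mul 2).exp.const_mul (α j)).const_add 1
  have h := ((ui.mul uj).sqrt (mul_pos hi hj).ne').add ((pi.add pj).exp.const_mul (η i j))
  refine h.congr_fderiv ?_
  ext v
  simp only [coshLen]
  rw [Real.sqrt_mul hi.le]
  have hi2 := Real.sq_sqrt hi.le
  have hj2 := Real.sq_sqrt hj.le
  have si := Real.sqrt_pos.2 hi
  have sj := Real.sqrt_pos.2 hj
  simp [Real.sqrt_mul hi.le]
  generalize Real.sqrt (1 + α i * Real.exp (2 * f i)) = a at *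
  generalize Real.sqrt (1 + α j * Real.exp (2 * f j)) = b at *
  have e1 : α i * Real.exp (2 * f i) = a^2 - 1 := by linarith
  have e2 : α j * Real.exp (2 * f j) = b^2 - 1 := by linarith
  have e3 : ∀ x, α i * (Real.exp (2 * f i) * (2 * x)) = 2 * x * (a^2-1) := by
    intro x; rw [← e1]; ring
  have e4 : ∀ x, α j * (Real.exp (2 * f j) * (2 * x)) = 2 * x * (b^2-1) := by
    intro x; rw [← e2]; ring
  rw [e3, e4, e1, e2]
  field_simp
  ring

theorem aux_angle {A B C : (Fin 3 → ℝ) → ℝ} {A' B' C' : (Fin 3 → ℝ) →L[ℝ] ℝ} {f : Fin 3 → ℝ}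
    (hA : HasFDerivAt A A' f) (hB : HasFDerivAt B B' f) (hC : HasFDerivAt C C' f)
    (h1 : 1 < A f) (h2 : 1 < B f)
    (hD : 0 < 1 + 2 * A f * B f * C f - A f ^ 2 - B f ^ 2 - C f ^ 2) (v : Fin 3 → ℝ) :
    fderiv ℝ (fun f => Real.arccos ((A f * B f - C f) /
      (Real.sqrt (A f ^ 2 - 1) * Real.sqrt (B f ^ 2 - 1)))) f v =
      (C' v - (A f * C f - B f) / (A f ^ 2 - 1) * A' v
        - (B f * C f - A f) / (B f ^ 2 - 1) * B' v) /
        Real.sqrt (1 + 2 * A f * B f * C f - A f ^ 2 - B f ^ 2 - C f ^ 2) := by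
  have pA : 0 < A f ^ 2 - 1 := by nlinarith
  have pB : 0 < B f ^ 2 - 1 := by nlinarith
  have sA := Real.sqrt_pos.2 pA
  have sB := Real.sqrt_pos.2 pB
  have sD := Real.sqrt_pos.2 hD
  have qA := Real.sq_sqrt pA.le
  have qB := Real.sq_sqrt pB.le
  have qD := Real.sq_sqrt hD.le
  have hx : 1 - ((A f * B f - C f) /
      (Real.sqrt (A f ^ 2 - 1) * Real.sqrt (B f ^ 2 - 1))) ^ 2 =
      (Real.sqrt (1 + 2 * A f * B f * C f - A f ^ 2 - B f ^ 2 - C f ^ 2) /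
      (Real.sqrt (A f ^ 2 - 1) * Real.sqrt (B f ^ 2 - 1))) ^ 2 := by
    rw [div_pow, div_pow, mul_pow, qA, qB, qD]
    field_simp
    ring
  have hpos : 0 < 1 - ((A f * B f - C f) /
      (Real.sqrt (A f ^ 2 - 1) * Real.sqrt (B f ^ 2 - 1))) ^ 2 := by rw [hx]; positivity
  have hn1 : (A f * B f - C f) /
      (Real.sqrt (A f ^ 2 - 1) * Real.sqrt (B f ^ 2 - 1)) ≠ -1 := by
    intro h; rw [h] at hpos; norm_num at hpos
  have hn2 : (A f * B f - C f) /
      (Real.sqrt (A f ^ 2 - 1) * Real.sqrt (B f ^ 2 - 1)) ≠ 1 := by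
    intro h; rw [h] at hpos; norm_num at hpos
  have dA := ((hA.pow 2).sub_const 1).sqrt pA.ne'
  have dB := ((hB.pow 2).sub_const 1).sqrt pB.ne'
  have dq := ((hA.mul hB).sub hC).mul
    ((hasDerivAt_inv (mul_pos sA sB).ne').comp_hasFDerivAt f (dA.mul dB))
  have h := (Real.hasDerivAt_arccos hn1 hn2).comp_hasFDerivAt f dq
  have h' := h.fderiv
  refine (DFunLike.congr_fun h' v).trans ?_
  rw [hx, Real.sqrt_sq (by positivity)]
  simp
  rw [← qA, ← qB]
  generalize Real.sqrt (1 + 2 * A f * B f * C f - A f ^ 2 - B f ^ 2 - C f ^ 2) = D at *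
  generalize Real.sqrt (A f ^ 2 - 1) = P at *
  generalize Real.sqrt (B f ^ 2 - 1) = Q at *
  have hA2 : A f ^ 2 = P ^ 2 + 1 := by linarith
  have hB2 : B f ^ 2 = Q ^ 2 + 1 := by linarith
  field_simp
  rw [Real.sqrt_sq sA.le, Real.sqrt_sq sB.le]
  linear_combination P ^ 2 * Q ^ 2 * (A' v * Q ^ 2 * B f) * hA2
    + P ^ 2 * Q ^ 2 * (B' v * P ^ 2 * A f) * hB2

theorem aux_tanh (x : ℝ) (hx : x ∈ Set.Ioo (-1 : ℝ) 1) : Real.tanh (artanh x) = x := by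
  have h := Real.artanh_eq_half_log (Set.Ioo_subset_Icc_self hx)
  have h2 : artanh x = Real.artanh x := by rw [h, artanh]; ring
  rw [h2, Real.tanh_artanh hx]

theorem aux_pd (M : Matrix (Fin 3) (Fin 3) ℝ) (c0 c1 c2 w0 w1 w2 : ℝ)
    (hc0 : 1 < c0) (hc1 : 1 < c1) (hc2 : 1 < c2) (h0 : 0 < w0) (h1 : 0 < w1) (h2 : 0 < w2)
    (e00 : M 0 0 = c1 * w1 + c2 * w2) (e11 : M 1 1 = c0 * w0 + c2 * w2)
    (e22 : M 2 2 = c0 * w0 + c1 * w1)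
    (e01 : M 0 1 = -w2) (e10 : M 1 0 = -w2) (e02 : M 0 2 = -w1) (e20 : M 2 0 = -w1)
    (e12 : M 1 2 = -w0) (e21 : M 2 1 = -w0) : M.IsSymm ∧ M.PosDef := by
  have hs : M.IsSymm := by
    ext i j
    fin_cases i <;> fin_cases j <;> simp [Matrix.transpose_apply, *]
  refine ⟨hs, ?_⟩
  refine Matrix.PosDef.of_dotProduct_mulVec_pos ?_ ?_
  · rw [Matrix.IsHermitian, Matrix.conjTranspose_eq_transpose_of_trivial]; exact hs
  · intro x hx
    have hne : 0 < x 0 ^ 2 + x 1 ^ 2 + x 2 ^ 2 := by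
      by_contra hcon
      apply hx
      ext i
      have a := sq_nonneg (x 0)
      have b := sq_nonneg (x 1)
      have c := sq_nonneg (x 2)
      fin_cases i <;> simp <;> apply pow_eq_zero_iff (two_ne_zero) |>.1 <;> linarith
    simp [Matrix.mulVec, dotProduct, Fin.sum_univ_three, *]
    have k : ∀ c w a b : ℝ, 1 < c → 0 < w → w * (c - 1) * (a^2+b^2) ≤ w * (c * a^2 + c*b^2 - 2*a*b) := by
      intro c w a b hc hw
      nlinarith [mul_nonneg hw.le (sq_nonneg (a-b))]
    have k0 := k c0 w0 (x 1) (x 2) hc0 h0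
    have k1 := k c1 w1 (x 0) (x 2) hc1 h1
    have k2 := k c2 w2 (x 0) (x 1) hc2 h2
    have p0 : 0 < w0 * (c0 - 1) := mul_pos h0 (by linarith)
    have p1 : 0 < w1 * (c1 - 1) := mul_pos h1 (by linarith)
    have p2 : 0 < w2 * (c2 - 1) := mul_pos h2 (by linarith)
    have key : 0 < w0 * (c0 - 1) * (x 1^2+x 2^2) + w1 * (c1 - 1) * (x 0^2+x 2^2)
        + w2 * (c2 - 1) * (x 0^2+x 1^2) := by
      have a := sq_nonneg (x 0)
      have b := sq_nonneg (x 1)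
      have c := sq_nonneg (x 2)
      rcases (lt_or_eq_of_le a) with a1 | a1
      · have : 0 < w2 * (c2 - 1) * (x 0^2+x 1^2) := mul_pos p2 (by linarith)
        positivity
      · have : 0 < w0 * (c0 - 1) * (x 1^2+x 2^2) := mul_pos p0 (by linarith)
        positivity
    nlinarith [k0, k1, k2, key]

theorem aux_symm (α : Fin 3 → ℝ) (η : Fin 3 → Fin 3 → ℝ) (hη : ∀ i j : Fin 3, η i j = η j i)
    (i j : Fin 3) : coshLen α η i j = coshLen α η j i := by
  funext f
  rw [coshLen, coshLen, hη i j, mul_comm (1 + α i * _), add_comm (f i)]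

theorem aux_pos (α : Fin 3 → ℝ) (η : Fin 3 → Fin 3 → ℝ) (f : Fin 3 → ℝ)
    (hα : ∀ i : Fin 3, 0 < 1 + α i * Real.exp (2 * f i))
    (hcosh : ∀ i j : Fin 3, i ≠ j → 1 < coshLen α η i j f)
    (hx : ∀ i j : Fin 3, i ≠ j → xCoef α η i j f ∈ Set.Ioo (-1 : ℝ) 1)
    (i j k : Fin 3) (hj : j = i + 1) (hk : k = i + 2)
    (hT : 0 < cT α η i j f) :
    0 < 1 + 2 * coshLen α η i j f * coshLen α η i k f * coshLen α η j k f
        - coshLen α η i j f ^ 2 - coshLen α η i k f ^ 2 - coshLen α η j k f ^ 2 ∧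
    0 < (Real.sqrt (1 + α i * Real.exp (2 * f i)) * coshLen α η i k f
          - Real.sqrt (1 + α k * Real.exp (2 * f k))) * (coshLen α η i j f ^ 2 - 1)
      - (Real.sqrt (1 + α i * Real.exp (2 * f i)) * coshLen α η i j f
          - Real.sqrt (1 + α j * Real.exp (2 * f j))) *
        (coshLen α η i j f * coshLen α η i k f - coshLen α η j k f) := by
  obtain ⟨hij, hik, hjk, ho⟩ := aux_idx i j k hj hk
  have x1 := hx i j hij
  have x2 := hx i k hik
  have g : ∀ l, i ≠ l → xCoef α η i l f =
      (coshLen α η i l f - Real.sqrt (1 + α l * Real.exp (2 * f l)) /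
          Real.sqrt (1 + α i * Real.exp (2 * f i))) / Real.sqrt (coshLen α η i l f ^ 2 - 1) := by
    intro l hl
    rw [xCoef, (aux_len α η i l f (hα i) (hα l)).fderiv]
    simp [hl.symm]
  have h1 := hcosh i j hij
  have h2 := hcosh i k hik
  have si := Real.sqrt_pos.2 (hα i)
  rw [cT, ho, dPart, dPart, aux_tanh _ x1, aux_tanh _ x2, cGamma, ← hj, ← hk, Real.sin_arccos] at hT
  have pA : 0 < coshLen α η i j f ^ 2 - 1 := by nlinarith
  have pB : 0 < coshLen α η i k f ^ 2 - 1 := by nlinarith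
  have sA := Real.sqrt_pos.2 pA
  have sB := Real.sqrt_pos.2 pB
  have qA := Real.sq_sqrt pA.le
  have qB := Real.sq_sqrt pB.le
  have hs : 0 < 1 - ((coshLen α η i j f * coshLen α η i k f - coshLen α η j k f) /
      (Real.sqrt (coshLen α η i j f ^ 2 - 1) * Real.sqrt (coshLen α η i k f ^ 2 - 1))) ^ 2 := by
    by_contra hcon
    rw [Real.sqrt_eq_zero_of_nonpos (not_lt.1 hcon), div_zero] at hT
    exact lt_irrefl _ hT
  have habs := abs_le.1 ((sq_le_one_iff_abs_le_one _).1 (by linarith :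
    ((coshLen α η i j f * coshLen α η i k f - coshLen α η j k f) /
      (Real.sqrt (coshLen α η i j f ^ 2 - 1) * Real.sqrt (coshLen α η i k f ^ 2 - 1))) ^ 2 ≤ 1))
  rw [Real.cos_arccos habs.1 habs.2, div_pos_iff_of_pos_right (Real.sqrt_pos.2 hs),
    mul_pos_iff_of_pos_left (Real.cosh_pos _), g j hij, g k hik] at hT
  constructor
  · rw [div_pow, mul_pow, qA, qB, sub_pos, div_lt_one (mul_pos pA pB)] at hs
    nlinarith
  · rw [← qA]
    have := aux_scalar _ _ _ _ _ _ _ _ sA sB si hT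
    convert this using 1

theorem aux_fd (α : Fin 3 → ℝ) (η : Fin 3 → Fin 3 → ℝ) (f : Fin 3 → ℝ)
    (hα : ∀ i : Fin 3, 0 < 1 + α i * Real.exp (2 * f i))
    (hcosh : ∀ i j : Fin 3, i ≠ j → 1 < coshLen α η i j f)
    (i j k : Fin 3) (hj : j = i + 1) (hk : k = i + 2)
    (hD : 0 < 1 + 2 * coshLen α η i j f * coshLen α η i k f * coshLen α η j k f
        - coshLen α η i j f ^ 2 - coshLen α η i k f ^ 2 - coshLen α η j k f ^ 2)
    (s : Fin 3 → ℝ) (hs : ∀ i, s i = Real.sqrt (1 + α i * Real.exp (2 * f i)))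
    (A B C : ℝ) (hA : coshLen α η i j f = A) (hB : coshLen α η i k f = B)
    (hC : coshLen α η j k f = C) (D : ℝ)
    (hDD : Real.sqrt (1 + 2 * A * B * C - A ^ 2 - B ^ 2 - C ^ 2) = D) :
    -(s i * fderiv ℝ (cGamma α η i) f (Pi.single i 1)) =
      ((A * C - B) / (A ^ 2 - 1) * (s i * A - s j) + (B * C - A) / (B ^ 2 - 1) * (s i * B - s k))
        / D ∧
    -(s j * fderiv ℝ (cGamma α η i) f (Pi.single j 1)) =
      -((s j * C - s k) - (A * C - B) / (A ^ 2 - 1) * (s j * A - s i)) / D ∧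
    -(s k * fderiv ℝ (cGamma α η i) f (Pi.single k 1)) =
      -((s k * C - s j) - (B * C - A) / (B ^ 2 - 1) * (s k * B - s i)) / D := by
  obtain ⟨hij, hik, hjk, -⟩ := aux_idx i j k hj hk
  have h1 := hcosh i j hij
  have h2 := hcosh i k hik
  have key := aux_angle (aux_len α η i j f (hα i) (hα j)) (aux_len α η i k f (hα i) (hα k))
    (aux_len α η j k f (hα j) (hα k)) h1 h2 hD
  have hfun : cGamma α η i = fun f => Real.arccos ((coshLen α η i j f * coshLen α η i k f
      - coshLen α η j k f) / (Real.sqrt (coshLen α η i j f ^ 2 - 1)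
      * Real.sqrt (coshLen α η i k f ^ 2 - 1))) := by
    subst hj hk; rfl
  have p : ∀ i, 0 < s i := fun i => by rw [hs]; exact Real.sqrt_pos.2 (hα i)
  have pi := (p i).ne'
  have pj := (p j).ne'
  have pk := (p k).ne'
  simp only [← hs, hA, hB, hC, hDD] at key
  rw [hfun, key, key, key]
  clear key
  simp [hij, hij.symm, hik, hik.symm, hjk, hjk.symm]
  refine ⟨?_, ?_, ?_⟩
  · field_simp
    ring
  · field_simp
    ring
  · field_simp
    ring

/-- Theorem 1.4/5.5 (convexity, hyperbolic background): for the discrete conformal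
structure determined by `α` and `η`, with positive partial edge lengths and positive
height factors, the matrix `N_ab = −√(1+α_b e^{2f_b}) ∂γ_a/∂f_b` (the Hessian
`−∂γ_a/∂u_b` in the variables `u`) is symmetric and positive definite. -/
theorem hyperbolic_conformal_convexity
    (α : Fin 3 → ℝ) (η : Fin 3 → Fin 3 → ℝ) (hη : ∀ i j : Fin 3, η i j = η j i)
    (U : Set (Fin 3 → ℝ)) (hUopen : IsOpen U)
    (hα : ∀ f ∈ U, ∀ i : Fin 3, 0 < 1 + α i * Real.exp (2 * f i))
    (hcosh : ∀ f ∈ U, ∀ i j : Fin 3, i ≠ j → 1 < coshLen α η i j f)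
    (htri : ∀ f ∈ U, ∀ i j k : Fin 3, i ≠ j → j ≠ k → i ≠ k →
      arcosh (coshLen α η i j f)
        < arcosh (coshLen α η i k f) + arcosh (coshLen α η k j f))
    (hx : ∀ f ∈ U, ∀ i j : Fin 3, i ≠ j →
      xCoef α η i j f ∈ Set.Ioo (-1 : ℝ) 1 ∧ 0 < dPart α η i j f)
    (hT : ∀ f ∈ U, ∀ i j : Fin 3, i ≠ j → 0 < cT α η i j f) :
    ∀ f ∈ U,
      (Matrix.of fun a b : Fin 3 =>
        -(Real.sqrt (1 + α b * Real.exp (2 * f b))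
          * fderiv ℝ (cGamma α η a) f (Pi.single b 1))).IsSymm ∧
      (Matrix.of fun a b : Fin 3 =>
        -(Real.sqrt (1 + α b * Real.exp (2 * f b))
          * fderiv ℝ (cGamma α η a) f (Pi.single b 1))).PosDef := by
  intro f hf
  have hs10 : coshLen α η 1 0 f = coshLen α η 0 1 f := by rw [aux_symm α η hη]
  have hs20 : coshLen α η 2 0 f = coshLen α η 0 2 f := by rw [aux_symm α η hη]
  have hs21 : coshLen α η 2 1 f = coshLen α η 1 2 f := by rw [aux_symm α η hη]
  have hxx : ∀ i j : Fin 3, i ≠ j → xCoef α η i j f ∈ Set.Ioo (-1 : ℝ) 1 :=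
    fun i j h => (hx f hf i j h).1
  have p0 := aux_pos α η f (hα f hf) (hcosh f hf) hxx 0 1 2 (by decide) (by decide)
    (hT f hf 0 1 (by decide))
  have p1 := aux_pos α η f (hα f hf) (hcosh f hf) hxx 1 2 0 (by decide) (by decide)
    (hT f hf 1 2 (by decide))
  have p2 := aux_pos α η f (hα f hf) (hcosh f hf) hxx 2 0 1 (by decide) (by decide)
    (hT f hf 2 0 (by decide))
  obtain ⟨s, hs⟩ : ∃ s : Fin 3 → ℝ, ∀ i, s i = Real.sqrt (1 + α i * Real.exp (2 * f i)) :=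
    ⟨_, fun _ => rfl⟩
  have hDp := p0.1
  have c01 := hcosh f hf 0 1 (by decide)
  have c02 := hcosh f hf 0 2 (by decide)
  have c12 := hcosh f hf 1 2 (by decide)
  have sD := Real.sqrt_pos.2 hDp
  have d0 := aux_fd α η f (hα f hf) (hcosh f hf) 0 1 2 (by decide) (by decide) p0.1 s hs
    _ _ _ rfl rfl rfl _ rfl
  have d1 := aux_fd α η f (hα f hf) (hcosh f hf) 1 2 0 (by decide) (by decide) p1.1 s hs
    _ _ _ rfl hs10 hs20
    (Real.sqrt (1 + 2 * coshLen α η 0 1 f * coshLen α η 0 2 f * coshLen α η 1 2 f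
        - coshLen α η 0 1 f ^ 2 - coshLen α η 0 2 f ^ 2 - coshLen α η 1 2 f ^ 2))
    (by congr 1; ring)
  have d2 := aux_fd α η f (hα f hf) (hcosh f hf) 2 0 1 (by decide) (by decide) p2.1 s hs
    _ _ _ hs20 hs21 rfl
    (Real.sqrt (1 + 2 * coshLen α η 0 1 f * coshLen α η 0 2 f * coshLen α η 1 2 f
        - coshLen α η 0 1 f ^ 2 - coshLen α η 0 2 f ^ 2 - coshLen α η 1 2 f ^ 2))
    (by congr 1; ring)
  have q0 := p0.2
  have q1 := p1.2
  have q2 := p2.2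
  simp only [hs10, hs20, hs21, ← hs] at q0 q1 q2 ⊢
  clear p0 p1 p2
  obtain ⟨d00, d01, d02⟩ := d0
  obtain ⟨d11, d12, d10⟩ := d1
  obtain ⟨d22, d20, d21⟩ := d2
  generalize Real.sqrt (1 + 2 * coshLen α η 0 1 f * coshLen α η 0 2 f * coshLen α η 1 2 f
        - coshLen α η 0 1 f ^ 2 - coshLen α η 0 2 f ^ 2 - coshLen α η 1 2 f ^ 2) = D at *
  clear hs10 hs20 hs21 hDp
  generalize coshLen α η 0 1 f = x at *
  generalize coshLen α η 0 2 f = y at *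
  generalize coshLen α η 1 2 f = z at *
  have px : 0 < x ^ 2 - 1 := by nlinarith
  have py : 0 < y ^ 2 - 1 := by nlinarith
  have pz : 0 < z ^ 2 - 1 := by nlinarith
  have nx := px.ne'
  have ny := py.ne'
  have nz := pz.ne'
  refine aux_pd _ z y x _ _ _ c12 c02 c01 (div_pos q1 (mul_pos pz sD))
    (div_pos q2 (mul_pos py sD)) (div_pos q0 (mul_pos px sD)) ?_ ?_ ?_ ?_ ?_ ?_ ?_ ?_ ?_
  all_goals rw [Matrix.of_apply]
  · rw [d00]; field_simp; ring
  · rw [d11]; field_simp; ring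
  · rw [d22]; field_simp; ring
  · rw [d01]; field_simp; ring
  · rw [d10]; field_simp
  · rw [d02]; field_simp
  · rw [d20]; field_simp; ring
  · rw [d12]; field_simp; ring
  · rw [d21]; field_simp
end
end

section
/- In a spherical conformal triangle datum, let A := γ₁ + γ₂ + γ₃ − π (the area of the spherical triangle). Then at every point of U and for each k ∈ {1,2,3} with {i,j,k} = {1,2,3}: ∂A/∂f_k = (1 − cos ℓ_ik)·∂γ_i/∂f_k + (1 − cos ℓ_jk)·∂γ_j/∂f_k. -/
noncomputable section

/-- The angle `γ_i` of the spherical triangle with side lengths `ℓ_ab`, defined by the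
spherical law of cosines
`cos γ_i = (cos ℓ_jk − cos ℓ_ij cos ℓ_ik)/(sin ℓ_ij sin ℓ_ik)`. -/
def sGamma (d : Fin 3 → Fin 3 → (Fin 3 → ℝ) → ℝ) (i : Fin 3) (x : Fin 3 → ℝ) : ℝ :=
  Real.arccos ((Real.cos (len d (i+1) (i+2) x)
      - Real.cos (len d i (i+1) x) * Real.cos (len d i (i+2) x)) /
    (Real.sin (len d i (i+1) x) * Real.sin (len d i (i+2) x)))

/-- The height factor `T_ij = cos d_ij (tan d_ik − tan d_ij cos γ_i)/sin γ_i`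
(geometrically `tan h_ij`). -/
def sT (d : Fin 3 → Fin 3 → (Fin 3 → ℝ) → ℝ) (i j : Fin 3) (x : Fin 3 → ℝ) : ℝ :=
  Real.cos (d i j x) * (Real.tan (d i (other i j) x)
      - Real.tan (d i j x) * Real.cos (sGamma d i x)) / Real.sin (sGamma d i x)


lemma cos_strict {a b c : ℝ} (ha : 0 < a ∧ a < Real.pi) (hb : 0 < b ∧ b < Real.pi)
    (hc : 0 < c ∧ c < Real.pi) (h1 : a < b + c) (h2 : b < a + c) (h3 : c < a + b)
    (h4 : a + b + c < 2 * Real.pi) :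
    Real.cos (b + c) < Real.cos a ∧ Real.cos a < Real.cos (b - c) := by
  constructor
  · rcases le_total (b + c) Real.pi with h | h
    · exact Real.cos_lt_cos_of_nonneg_of_le_pi ha.1.le h h1
    · rw [← Real.cos_two_pi_sub]
      exact Real.cos_lt_cos_of_nonneg_of_le_pi ha.1.le (by linarith) (by linarith)
  · rw [← Real.cos_abs (b - c)]
    exact Real.cos_lt_cos_of_nonneg_of_le_pi (abs_nonneg _) ha.2.le
      (abs_lt.2 ⟨by linarith, by linarith⟩)

/-- angle function -/
def angG {E : Type*} (a b c : E → ℝ) (y : E) : ℝ :=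
  Real.arccos ((Real.cos (a y) - Real.cos (b y) * Real.cos (c y)) /
    (Real.sin (b y) * Real.sin (c y)))

def gramD (a b c : ℝ) : ℝ :=
  √(1 - Real.cos a ^ 2 - Real.cos b ^ 2 - Real.cos c ^ 2
    + 2 * Real.cos a * Real.cos b * Real.cos c)

lemma angG_deriv {E : Type*} [NormedAddCommGroup E] [NormedSpace ℝ E] {a b c : E → ℝ} {x : E}
    (da : DifferentiableAt ℝ a x) (db : DifferentiableAt ℝ b x) (dc : DifferentiableAt ℝ c x)
    (ha : 0 < a x ∧ a x < Real.pi) (hb : 0 < b x ∧ b x < Real.pi)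
    (hc : 0 < c x ∧ c x < Real.pi) (h1 : a x < b x + c x) (h2 : b x < a x + c x)
    (h3 : c x < a x + b x) (h4 : a x + b x + c x < 2 * Real.pi) :
    DifferentiableAt ℝ (angG a b c) x ∧ 0 < gramD (a x) (b x) (c x) ∧
    ∃ q : ℝ, Real.sin (b x) * Real.sin (c x) * q
        = Real.cos (a x) - Real.cos (b x) * Real.cos (c x) ∧
      ∀ v : E, gramD (a x) (b x) (c x) * fderiv ℝ (angG a b c) x v
        = Real.sin (a x) * fderiv ℝ a x v
          - (Real.sin (b x) * Real.cos (c x) - Real.cos (b x) * Real.sin (c x) * q)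
              * fderiv ℝ b x v
          - (Real.sin (c x) * Real.cos (b x) - Real.cos (c x) * Real.sin (b x) * q)
              * fderiv ℝ c x v := by
  obtain ⟨hA, hB⟩ := cos_strict ha hb hc h1 h2 h3 h4
  rw [Real.cos_add] at hA
  rw [Real.cos_sub] at hB
  have sb : 0 < Real.sin (b x) := Real.sin_pos_of_pos_of_lt_pi hb.1 hb.2
  have sc : 0 < Real.sin (c x) := Real.sin_pos_of_pos_of_lt_pi hc.1 hc.2
  have sbc := mul_pos sb sc
  obtain ⟨q, hq⟩ : ∃ q, q = (Real.cos (a x) - Real.cos (b x) * Real.cos (c x)) /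
    (Real.sin (b x) * Real.sin (c x)) := ⟨_, rfl⟩
  have hq1 : Real.sin (b x) * Real.sin (c x) * q
        = Real.cos (a x) - Real.cos (b x) * Real.cos (c x) := by
    rw [hq]; field_simp
  have hlt : q < 1 := by rw [hq, div_lt_one sbc]; linarith
  have hgt : -1 < q := by rw [hq, lt_div_iff₀ sbc]; linarith
  have hq2 : 0 < 1 - q ^ 2 := by nlinarith
  have hD : gramD (a x) (b x) (c x) = Real.sin (b x) * Real.sin (c x) * √(1 - q ^ 2) := by
    have : 1 - Real.cos (a x) ^ 2 - Real.cos (b x) ^ 2 - Real.cos (c x) ^ 2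
        + 2 * Real.cos (a x) * Real.cos (b x) * Real.cos (c x)
        = (Real.sin (b x) * Real.sin (c x)) ^ 2 * (1 - q ^ 2) := by
      have e1 := Real.sin_sq_add_cos_sq (b x)
      have e2 := Real.sin_sq_add_cos_sq (c x)
      have e3 : (Real.sin (b x) * Real.sin (c x)) ^ 2 * (1 - q ^ 2) =
        Real.sin (b x) ^ 2 * Real.sin (c x) ^ 2
          - (Real.sin (b x) * Real.sin (c x) * q) ^ 2 := by ring
      rw [e3, hq1, Real.sin_sq, Real.sin_sq]; ring
    rw [gramD, this, Real.sqrt_mul (sq_nonneg _), Real.sqrt_sq sbc.le]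
  have hs : 0 < √(1 - q ^ 2) := Real.sqrt_pos.2 hq2
  have hN := da.hasFDerivAt.cos.sub (db.hasFDerivAt.cos.mul dc.hasFDerivAt.cos)
  have hM := db.hasFDerivAt.sin.mul dc.hasFDerivAt.sin
  have hQ := hN.mul ((hasDerivAt_inv sbc.ne').comp_hasFDerivAt x hM)
  have hG := (Real.hasDerivAt_arccos (x := q) hgt.ne' hlt.ne)
  rw [hq] at hG
  have hF := hG.comp_hasFDerivAt x hQ
  have hF' : HasFDerivAt (angG a b c) _ x := hF
  refine ⟨hF'.differentiableAt, by rw [hD]; positivity, q, hq1, fun v => ?_⟩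
  rw [hF'.fderiv, hD]
  simp only [Pi.sub_apply, Pi.mul_apply]
  rw [← hq, ← hq1]
  simp
  field_simp
  ring

lemma final_alg {D A' B' C' a' b' sa sb sc ca cb cc qA qB qC : ℝ} (hD : 0 < D)
    (hsa : 0 < sa) (hsb : 0 < sb)
    (pa : sa ^ 2 + ca ^ 2 = 1) (pb : sb ^ 2 + cb ^ 2 = 1)
    (hA : sb * sc * qA = ca - cb * cc) (hB : sa * sc * qB = cb - ca * cc)
    (hC : sa * sb * qC = cc - ca * cb)
    (eA : D * A' = sa * a' - (sb * cc - cb * sc * qA) * b')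
    (eB : D * B' = sb * b' - (sa * cc - ca * sc * qB) * a')
    (eC : D * C' = - (sa * cb - ca * sb * qC) * a' - (sb * ca - cb * sa * qC) * b') :
    C' = - ca * B' - cb * A' := by
  have k1 : qC * sb - sa * cc + ca * sc * qB = 0 := by
    apply mul_left_cancel₀ hsa.ne'
    linear_combination hC + ca * hB - cc * pa
  have k2 : qC * sa - sb * cc + cb * sc * qA = 0 := by
    apply mul_left_cancel₀ hsb.ne'
    linear_combination hC + cb * hA - cc * pb
  apply mul_left_cancel₀ hD.ne'
  linear_combination eC + ca * eB + cb * eA + ca * a' * k1 + cb * b' * k2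

lemma len_comm (d : Fin 3 → Fin 3 → (Fin 3 → ℝ) → ℝ) (i j : Fin 3) : len d i j = len d j i := by
  funext x; simp [len, add_comm]

lemma sGamma_eq (d : Fin 3 → Fin 3 → (Fin 3 → ℝ) → ℝ) (i j k : Fin 3) (hij : i ≠ j)
    (hjk : j ≠ k) (hik : i ≠ k) :
    sGamma d i = angG (len d j k) (len d i j) (len d i k) := by
  have : (j = i + 1 ∧ k = i + 2) ∨ (j = i + 2 ∧ k = i + 1) := by
    revert i j k; decide
  funext x
  rcases this with ⟨rfl, rfl⟩ | ⟨rfl, rfl⟩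
  · rfl
  · unfold sGamma angG
    rw [len_comm d (i+1) (i+2), mul_comm (Real.cos (len d i (i+1) x)),
      mul_comm (Real.sin (len d i (i+1) x))]

lemma sum_perm (g : Fin 3 → ℝ) (i j k : Fin 3) (hij : i ≠ j)
    (hjk : j ≠ k) (hik : i ≠ k) : g 0 + g 1 + g 2 = g i + g j + g k := by
  fin_cases i <;> fin_cases j <;> fin_cases k <;> simp at hij hjk hik ⊢ <;> ring

/-- Proposition 7.3 (variation of spherical area `A = γ₁ + γ₂ + γ₃ − π`):
`∂A/∂f_k = (1 − cos ℓ_ik) ∂γ_i/∂f_k + (1 − cos ℓ_jk) ∂γ_j/∂f_k`. -/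
theorem spherical_area_variation
    (U : Set (Fin 3 → ℝ)) (hUopen : IsOpen U)
    (d : Fin 3 → Fin 3 → (Fin 3 → ℝ) → ℝ)
    (hsmooth : ∀ i j : Fin 3, i ≠ j → ContDiffOn ℝ (⊤ : ℕ∞) (d i j) U)
    (hrange : ∀ i j : Fin 3, i ≠ j → ∀ x ∈ U,
      d i j x ∈ Set.Ioo (-(Real.pi / 2)) (Real.pi / 2))
    (hdep : ∀ i j k : Fin 3, i ≠ j → k ≠ i → k ≠ j → ∀ x ∈ U, pd k (d i j) x = 0)
    (hlen : ∀ i j : Fin 3, i ≠ j → ∀ x ∈ U, 0 < len d i j x ∧ len d i j x < Real.pi)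
    (htri : ∀ i j k : Fin 3, i ≠ j → j ≠ k → i ≠ k → ∀ x ∈ U,
      len d i j x < len d i k x + len d k j x)
    (hperim : ∀ x ∈ U, len d 0 1 x + len d 1 2 x + len d 0 2 x < 2 * Real.pi)
    (hcompat : ∀ x ∈ U,
      Real.cos (d 0 1 x) * Real.cos (d 1 2 x) * Real.cos (d 2 0 x)
        = Real.cos (d 1 0 x) * Real.cos (d 2 1 x) * Real.cos (d 0 2 x))
    (hconf : ∀ i j : Fin 3, i ≠ j → ∀ x ∈ U, pd i (len d i j) x = Real.tan (d i j x))
    :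
    ∀ x ∈ U, ∀ i j k : Fin 3, i ≠ j → j ≠ k → i ≠ k →
      pd k (fun y => sGamma d 0 y + sGamma d 1 y + sGamma d 2 y - Real.pi) x
        = (1 - Real.cos (len d i k x)) * pd k (sGamma d i) x
          + (1 - Real.cos (len d j k x)) * pd k (sGamma d j) x := by
  intro x hx i j k hij hjk hik
  have dd : ∀ i j : Fin 3, i ≠ j → DifferentiableAt ℝ (d i j) x := fun i j h =>
    ((hsmooth i j h).contDiffAt (hUopen.mem_nhds hx)).differentiableAt (by simp)
  have dl : ∀ i j : Fin 3, i ≠ j → DifferentiableAt ℝ (len d i j) x := fun i j h =>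
    (dd i j h).add (dd j i h.symm)
  have dc : fderiv ℝ (len d i j) x (Pi.single k 1) = 0 := by
    have h : HasFDerivAt (len d i j) _ x :=
      (dd i j hij).hasFDerivAt.add (dd j i hij.symm).hasFDerivAt
    have h1 := hdep i j k hij hik.symm hjk.symm x hx
    have h2 := hdep j i k hij.symm hjk.symm hik.symm x hx
    unfold pd at h1 h2
    rw [h.fderiv, add_apply, h1, h2, add_zero]
  have hper : len d i j x + len d i k x + len d j k x < 2 * Real.pi := by
    have h0 := hperim x hx
    have e : ∀ i j, len d i j x = len d j i x := fun i j => congrFun (len_comm d i j) x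
    have e1 := e 0 1
    have e2 := e 0 2
    have e3 := e 1 2
    clear dc
    fin_cases i <;> fin_cases j <;> fin_cases k <;> simp at hij hjk hik ⊢ <;> linarith
  have key : ∀ i j k : Fin 3, i ≠ j → j ≠ k → i ≠ k → len d i j x + len d i k x + len d j k x < 2 * Real.pi →
    DifferentiableAt ℝ (sGamma d i) x ∧ 0 < gramD (len d j k x) (len d i j x) (len d i k x) ∧
    ∃ q : ℝ, Real.sin (len d i j x) * Real.sin (len d i k x) * q
        = Real.cos (len d j k x) - Real.cos (len d i j x) * Real.cos (len d i k x) ∧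
      ∀ v, gramD (len d j k x) (len d i j x) (len d i k x) * fderiv ℝ (sGamma d i) x v
        = Real.sin (len d j k x) * fderiv ℝ (len d j k) x v
          - (Real.sin (len d i j x) * Real.cos (len d i k x)
              - Real.cos (len d i j x) * Real.sin (len d i k x) * q)
              * fderiv ℝ (len d i j) x v
          - (Real.sin (len d i k x) * Real.cos (len d i j x)
              - Real.cos (len d i k x) * Real.sin (len d i j x) * q)
              * fderiv ℝ (len d i k) x v := by
    intro i j k hij hjk hik hp
    rw [sGamma_eq d i j k hij hjk hik]
    have t1 := htri j k i hjk hik.symm hij.symm x hx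
    have t2 := htri i j k hij hjk hik x hx
    have t3 := htri i k j hik hjk.symm hij x hx
    rw [len_comm d j i] at t1
    rw [len_comm d k j] at t2
    exact angG_deriv (dl j k hjk) (dl i j hij) (dl i k hik) (hlen j k hjk x hx)
      (hlen i j hij x hx) (hlen i k hik x hx) t1 (by linarith) (by linarith) (by linarith)
  obtain ⟨DA, hD, qA, hA, eA⟩ := key i j k hij hjk hik hper
  obtain ⟨DB, -, qB, hB, eB⟩ := key j i k hij.symm hik hjk
    (by rw [len_comm d j i]; linarith)
  obtain ⟨DC, -, qC, hC, eC⟩ := key k i j hik.symm hij hjk.symm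
    (by rw [len_comm d k i, len_comm d k j]; linarith)
  specialize eA (Pi.single k 1)
  specialize eB (Pi.single k 1)
  specialize eC (Pi.single k 1)
  rw [len_comm d j i] at hB eB
  rw [len_comm d k i, len_comm d k j] at hC eC
  have g1 : gramD (len d i k x) (len d i j x) (len d j k x)
      = gramD (len d j k x) (len d i j x) (len d i k x) := by
    unfold gramD; congr 1; ring
  have g2 : gramD (len d i j x) (len d i k x) (len d j k x)
      = gramD (len d j k x) (len d i j x) (len d i k x) := by
    unfold gramD; congr 1; ring
  rw [g1] at eB
  rw [g2] at eC
  rw [dc] at eA eB eC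
  have sp : ∀ i j : Fin 3, i ≠ j → 0 < Real.sin (len d i j x) := fun i j h =>
    Real.sin_pos_of_pos_of_lt_pi (hlen i j h x hx).1 (hlen i j h x hx).2
  have fin := final_alg (sc := Real.sin (len d i j x)) (cc := Real.cos (len d i j x))
    hD (sp j k hjk) (sp i k hik) (Real.sin_sq_add_cos_sq _)
    (Real.sin_sq_add_cos_sq _) (qA := qA) (qB := qB) (qC := qC)
    (A' := fderiv ℝ (sGamma d i) x (Pi.single k 1)) (B' := fderiv ℝ (sGamma d j) x (Pi.single k 1))
    (C' := fderiv ℝ (sGamma d k) x (Pi.single k 1))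
    (a' := fderiv ℝ (len d j k) x (Pi.single k 1)) (b' := fderiv ℝ (len d i k) x (Pi.single k 1))
    (by linear_combination hA) (by linear_combination hB) (by linear_combination hC)
    (by linear_combination eA) (by linear_combination eB) (by linear_combination eC)
  have hfun : (fun y => sGamma d 0 y + sGamma d 1 y + sGamma d 2 y - Real.pi)
      = fun y => sGamma d i y + sGamma d j y + sGamma d k y - Real.pi := by
    funext y
    rw [sum_perm (fun m => sGamma d m y) i j k hij hjk hik]
  have hsum : HasFDerivAt (fun y => sGamma d i y + sGamma d j y + sGamma d k y - Real.pi) _ x :=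
    ((DA.hasFDerivAt.add DB.hasFDerivAt).add DC.hasFDerivAt).sub_const Real.pi
  unfold pd
  rw [hfun, hsum.fderiv]
  simp only [add_apply]
  rw [fin]; ring
end
end
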